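/- arXiv:1712.02243 — 2 statements merged into one kernel-verified Lean document; each statement's English description precedes it below -/
import Mathlib

section
/- If f:X→Y is a coarse equivalence between metric spaces (there is a coarse map g:Y→X with f∘g close to id_Y and g∘f close to id_X), then soe(f):soe(X)→soe(Y) is a uniform isomorphism: soe(f) is bijective, and both soe(f) and its inverse are uniformly continuous with respect to the uniformities generated by the entourages D_𝒰. -/
/-!
Everything is phrased through distance bounds: `SameEnd φ ψ` says that `φ(ℕ)` lies in a bounded
neighbourhood of `ψ(ℕ)`, and `inUNbhd U φ ψ` says that each of `φ(ℕ)`, `ψ(ℕ)` lies in a bounded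
neighbourhood of the coarse star of the other.

Let `g` be a coarse inverse of `f`. Bijectivity: `f φ(ℕ)` near `f ψ(ℕ)` gives `g f φ(ℕ)` near
`g f ψ(ℕ)`, hence `φ(ℕ)` near `ψ(ℕ)`; and `g ∘ ψ` is a preimage of the endpoint of `ψ`.
Uniform continuity holds for any coarse map `h`: preimages of coentourages under `h × h` are
coentourages, so `h⁻¹(U i)` is a coarse cover whenever `U` is (`IsCoarseCover.preimage`), and
`A ≬ h⁻¹(U i)` implies `h(A) ≬ U i`, so `h` maps stars into stars (`inUNbhd.comp`).
For the inverse of `soe f` this is applied to `h = g`: it yields the relation between `g ∘ f ∘ φ`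
and `g ∘ f ∘ ψ`, which descends to `φ` and `ψ` because the relation is insensitive to replacing
a map by a close one (`inUNbhd.of_close`).
-/

open Set

variable {X Y : Type*}

/-- A set `E ⊆ X × X` is an entourage if `sup_{(x,y) ∈ E} d(x,y) < ∞`. -/
def IsEntourage [MetricSpace X] (E : Set (X × X)) : Prop :=
  ∃ C : ℝ, ∀ p ∈ E, dist p.1 p.2 ≤ C

/-- A set `B ⊆ X` is bounded if `B × B` is an entourage. -/
def IsBoundedSet [MetricSpace X] (B : Set X) : Prop :=
  IsEntourage (B ×ˢ B)

/-- A set `C ⊆ X × X` is a coentourage if for every entourage `E` there is a bounded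
set `B` with `E ∩ C ⊆ B × B`. -/
def IsCoentourage [MetricSpace X] (C : Set (X × X)) : Prop :=
  ∀ E : Set (X × X), IsEntourage E → ∃ B : Set X, IsBoundedSet B ∧ E ∩ C ⊆ B ×ˢ B

/-- `A` and `B` are close (`A ≬ B`) if `A × B` is not a coentourage. -/
def CloseSets [MetricSpace X] (A B : Set X) : Prop :=
  ¬ IsCoentourage (A ×ˢ B)

/-- `E[A] = {y : (x,y) ∈ E for some x ∈ A}`. -/
def entImage (E : Set (X × X)) (A : Set X) : Set X :=
  {y | ∃ x ∈ A, (x, y) ∈ E}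

/-- A finite family `U i` of subsets of `X` is a coarse cover of `X` if
`(X × X) ∖ ⋃ i, U i × U i` is a coentourage. -/
def IsCoarseCover [MetricSpace X] {ι : Type*} (U : ι → Set X) : Prop :=
  IsCoentourage ((⋃ i, U i ×ˢ U i)ᶜ)

/-- The coarse star `st(S, 𝒰) = ⋃ {Uᵢ : S ≬ Uᵢ}`. -/
def coarseStar [MetricSpace X] {ι : Type*} (S : Set X) (U : ι → Set X) : Set X :=
  ⋃ i ∈ {i | CloseSets S (U i)}, U i

/-- `𝒱` coarsely star refines `𝒰` if for every `j` there are an `i` and an entourage `E`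
with `st(Vⱼ, 𝒱) ⊆ E[Uᵢ]`. -/
def IsCoarseStarRefinement [MetricSpace X] {ι κ : Type*} (V : κ → Set X) (U : ι → Set X) : Prop :=
  ∀ j, ∃ i, ∃ E : Set (X × X), IsEntourage E ∧ coarseStar (V j) V ⊆ entImage E (U i)

/-- `f : X → Y` is a coarse map if it maps entourages to entourages and preimages of
bounded sets are bounded. -/
def IsCoarseMap [MetricSpace X] [MetricSpace Y] (f : X → Y) : Prop :=
  (∀ E : Set (X × X), IsEntourage E → IsEntourage (Prod.map f f '' E)) ∧
  (∀ A : Set Y, IsBoundedSet A → IsBoundedSet (f ⁻¹' A))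

/-- Two maps `f g : X → Y` are close if `{(f x, g x) : x ∈ X}` is an entourage of `Y`. -/
def CloseMaps [MetricSpace X] [MetricSpace Y] (f g : X → Y) : Prop :=
  IsEntourage (Set.range fun x => (f x, g x))

/-- Two coarse maps `φ ψ : ℕ → X` represent the same endpoint of `X` if there is an
entourage `E` of `X` with `E[ψ(ℕ)] = φ(ℕ)`. -/
def SameEnd [MetricSpace X] (φ ψ : ℕ → X) : Prop :=
  ∃ E : Set (X × X), IsEntourage E ∧ entImage E (Set.range ψ) = Set.range φ

/-- For endpoints `p, q` represented by `φ, ψ`, `q ∈ 𝒰[p]` means there is an entourage `E`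
with `ψ(ℕ) ⊆ E[st(φ(ℕ), 𝒰)]` and `φ(ℕ) ⊆ E[st(ψ(ℕ), 𝒰)]`. -/
def inUNbhd [MetricSpace X] {ι : Type*} (U : ι → Set X) (φ ψ : ℕ → X) : Prop :=
  ∃ E : Set (X × X), IsEntourage E ∧
    Set.range ψ ⊆ entImage E (coarseStar (Set.range φ) U) ∧
    Set.range φ ⊆ entImage E (coarseStar (Set.range ψ) U)

theorem IsCoarseMap.dist_le [MetricSpace X] [MetricSpace Y] {f : X → Y} (hf : IsCoarseMap f)
    (C : ℝ) : ∃ D : ℝ, ∀ x y, dist x y ≤ C → dist (f x) (f y) ≤ D := by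
  obtain ⟨D, hD⟩ := hf.1 {p | dist p.1 p.2 ≤ C} ⟨C, fun p hp => hp⟩
  exact ⟨D, fun x y h => hD (f x, f y) ⟨(x, y), h, rfl⟩⟩

theorem CloseMaps.dist_le [MetricSpace X] [MetricSpace Y] {f g : X → Y} (h : CloseMaps f g) :
    ∃ C : ℝ, ∀ x, dist (f x) (g x) ≤ C := by
  obtain ⟨C, hC⟩ := h
  exact ⟨C, fun x => hC _ ⟨x, rfl⟩⟩

theorem IsCoarseMap.comp {Z : Type*} [MetricSpace X] [MetricSpace Y] [MetricSpace Z]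
    {g : Y → Z} {f : X → Y} (hg : IsCoarseMap g) (hf : IsCoarseMap f) : IsCoarseMap (g ∘ f) := by
  refine ⟨fun E hE => ?_, fun A hA => hf.2 _ (hg.2 A hA)⟩
  rw [← Prod.map_comp_map, Set.image_comp]
  exact hg.1 _ (hf.1 E hE)

/-- The equality of sets in `SameEnd` only expresses that `φ(ℕ)` lies in a bounded neighbourhood
of `ψ(ℕ)`: an entourage witnessing the latter can be cut down to `ψ(ℕ) × φ(ℕ)`. -/
theorem sameEnd_iff [MetricSpace X] {φ ψ : ℕ → X} :
    SameEnd φ ψ ↔ ∃ C : ℝ, ∀ n, ∃ m, dist (ψ m) (φ n) ≤ C := by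
  constructor
  · rintro ⟨E, ⟨C, hC⟩, h⟩
    refine ⟨C, fun n => ?_⟩
    obtain ⟨_, ⟨m, rfl⟩, hm⟩ := h.symm.subset ⟨n, rfl⟩
    exact ⟨m, hC _ hm⟩
  · rintro ⟨C, hC⟩
    refine ⟨{p | p.2 ∈ Set.range φ ∧ dist p.1 p.2 ≤ C}, ⟨C, fun p hp => hp.2⟩, ?_⟩
    apply Set.Subset.antisymm
    · rintro y ⟨x, -, hy, -⟩
      exact hy
    · rintro _ ⟨n, rfl⟩
      obtain ⟨m, hm⟩ := hC n
      exact ⟨ψ m, ⟨m, rfl⟩, ⟨n, rfl⟩, hm⟩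

theorem inUNbhd_iff [MetricSpace X] {ι : Type*} {U : ι → Set X} {φ ψ : ℕ → X} :
    inUNbhd U φ ψ ↔ ∃ C : ℝ,
      (∀ n, ∃ i, CloseSets (Set.range φ) (U i) ∧ ∃ x ∈ U i, dist x (ψ n) ≤ C) ∧
      (∀ n, ∃ i, CloseSets (Set.range ψ) (U i) ∧ ∃ x ∈ U i, dist x (φ n) ≤ C) := by
  constructor
  · rintro ⟨E, ⟨C, hC⟩, h₁, h₂⟩
    refine ⟨C, fun n => ?_, fun n => ?_⟩
    · obtain ⟨x, hx, hE⟩ := h₁ ⟨n, rfl⟩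
      obtain ⟨i, hi, hxi⟩ := Set.mem_iUnion₂.1 hx
      exact ⟨i, hi, x, hxi, hC _ hE⟩
    · obtain ⟨x, hx, hE⟩ := h₂ ⟨n, rfl⟩
      obtain ⟨i, hi, hxi⟩ := Set.mem_iUnion₂.1 hx
      exact ⟨i, hi, x, hxi, hC _ hE⟩
  · rintro ⟨C, h₁, h₂⟩
    refine ⟨{p | dist p.1 p.2 ≤ C}, ⟨C, fun p hp => hp⟩, ?_, ?_⟩
    · rintro _ ⟨n, rfl⟩
      obtain ⟨i, hi, x, hx, hd⟩ := h₁ n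
      exact ⟨x, Set.mem_iUnion₂.2 ⟨i, hi, hx⟩, hd⟩
    · rintro _ ⟨n, rfl⟩
      obtain ⟨i, hi, x, hx, hd⟩ := h₂ n
      exact ⟨x, Set.mem_iUnion₂.2 ⟨i, hi, hx⟩, hd⟩

theorem IsCoentourage.mono [MetricSpace X] {C D : Set (X × X)} (hD : IsCoentourage D)
    (h : C ⊆ D) : IsCoentourage C := by
  intro E hE
  obtain ⟨B, hB, hs⟩ := hD E hE
  exact ⟨B, hB, (Set.inter_subset_inter_right E h).trans hs⟩

theorem IsCoentourage.preimage [MetricSpace X] [MetricSpace Y] {f : X → Y} (hf : IsCoarseMap f)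
    {C : Set (Y × Y)} (hC : IsCoentourage C) : IsCoentourage (Prod.map f f ⁻¹' C) := by
  intro E hE
  obtain ⟨B, hB, hs⟩ := hC _ (hf.1 E hE)
  exact ⟨f ⁻¹' B, hf.2 B hB, fun p hp => hs ⟨⟨p, hp.1, rfl⟩, hp.2⟩⟩

theorem IsBoundedSet.thicken [MetricSpace X] {B : Set X} (hB : IsBoundedSet B) (C : ℝ) :
    IsBoundedSet {x | ∃ b ∈ B, dist x b ≤ C} := by
  obtain ⟨D, hD⟩ := hB
  refine ⟨C + D + C, ?_⟩
  rintro ⟨x, y⟩ ⟨⟨b, hb, hxb⟩, c, hc, hyc⟩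
  have h₁ : dist b c ≤ D := hD (b, c) ⟨hb, hc⟩
  have h₂ := dist_triangle4 x b c y
  rw [dist_comm c y] at h₂
  change dist x y ≤ _
  linarith

theorem CloseSets.image [MetricSpace X] [MetricSpace Y] {f : X → Y} (hf : IsCoarseMap f)
    {A : Set X} {U : Set Y} (h : CloseSets A (f ⁻¹' U)) : CloseSets (f '' A) U := by
  intro hco
  exact h ((hco.preimage hf).mono fun p hp => ⟨⟨p.1, hp.1, rfl⟩, hp.2⟩)

/-- Closeness to a set passes from `A'` to any `A` having `A'` in a bounded neighbourhood. -/
theorem CloseSets.of_near [MetricSpace X] {A A' V : Set X} {C : ℝ} (hC : 0 ≤ C)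
    (hA : ∀ a' ∈ A', ∃ a ∈ A, dist a' a ≤ C) (h : CloseSets A' V) : CloseSets A V := by
  intro hco
  refine h fun E ⟨D, hD⟩ => ?_
  obtain ⟨B, hB, hs⟩ := hco {p | dist p.1 p.2 ≤ C + D} ⟨C + D, fun p hp => hp⟩
  refine ⟨_, hB.thicken C, ?_⟩
  rintro ⟨x, v⟩ ⟨hE, hx, hv⟩
  obtain ⟨a, ha, hd⟩ := hA x hx
  have h₁ : dist x v ≤ D := hD _ hE
  have h₂ : dist a v ≤ C + D := by
    have := dist_triangle_left a v x
    linarith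
  have h₃ : (a, v) ∈ B ×ˢ B := hs ⟨h₂, ha, hv⟩
  exact ⟨⟨a, h₃.1, hd⟩, v, h₃.2, by rwa [dist_self]⟩

theorem IsCoarseCover.preimage [MetricSpace X] [MetricSpace Y] {f : X → Y} (hf : IsCoarseMap f)
    {ι : Type*} {U : ι → Set Y} (hU : IsCoarseCover U) : IsCoarseCover fun i => f ⁻¹' U i := by
  refine (IsCoentourage.preimage hf hU).mono fun p hp hmem => hp ?_
  obtain ⟨i, hi⟩ := Set.mem_iUnion.1 hmem
  exact Set.mem_iUnion.2 ⟨i, hi⟩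

theorem IsCoarseCover.reindex [MetricSpace X] {ι κ : Type*} {U : ι → Set X}
    (hU : IsCoarseCover U) (e : κ ≃ ι) : IsCoarseCover fun k => U (e k) := by
  unfold IsCoarseCover
  rwa [e.surjective.iUnion_comp fun i => U i ×ˢ U i]

theorem inUNbhd.of_reindex [MetricSpace X] {ι κ : Type*} {U : ι → Set X} (e : κ → ι)
    {φ ψ : ℕ → X} (h : inUNbhd (fun k => U (e k)) φ ψ) : inUNbhd U φ ψ := by
  obtain ⟨C, h₁, h₂⟩ := inUNbhd_iff.1 h
  refine inUNbhd_iff.2 ⟨C, fun n => ?_, fun n => ?_⟩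
  · obtain ⟨k, hk⟩ := h₁ n
    exact ⟨e k, hk⟩
  · obtain ⟨k, hk⟩ := h₂ n
    exact ⟨e k, hk⟩

theorem inUNbhd.comp [MetricSpace X] [MetricSpace Y] {f : X → Y} (hf : IsCoarseMap f)
    {ι : Type*} {U : ι → Set Y} {φ ψ : ℕ → X} (h : inUNbhd (fun i => f ⁻¹' U i) φ ψ) :
    inUNbhd U (f ∘ φ) (f ∘ ψ) := by
  obtain ⟨C, h₁, h₂⟩ := inUNbhd_iff.1 h
  obtain ⟨D, hD⟩ := hf.dist_le C
  refine inUNbhd_iff.2 ⟨D, fun n => ?_, fun n => ?_⟩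
  · obtain ⟨i, hi, x, hx, hd⟩ := h₁ n
    refine ⟨i, ?_, f x, hx, hD _ _ hd⟩
    rw [Set.range_comp]
    exact hi.image hf
  · obtain ⟨i, hi, x, hx, hd⟩ := h₂ n
    refine ⟨i, ?_, f x, hx, hD _ _ hd⟩
    rw [Set.range_comp]
    exact hi.image hf

theorem inUNbhd.of_close [MetricSpace X] {ι : Type*} {U : ι → Set X} {φ ψ φ' ψ' : ℕ → X} {C : ℝ}
    (hφ : ∀ n, dist (φ' n) (φ n) ≤ C) (hψ : ∀ n, dist (ψ' n) (ψ n) ≤ C)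
    (h : inUNbhd U φ' ψ') : inUNbhd U φ ψ := by
  have hC : 0 ≤ C := dist_nonneg.trans (hφ 0)
  obtain ⟨D, h₁, h₂⟩ := inUNbhd_iff.1 h
  refine inUNbhd_iff.2 ⟨D + C, fun n => ?_, fun n => ?_⟩
  · obtain ⟨i, hi, x, hx, hd⟩ := h₁ n
    refine ⟨i, hi.of_near hC ?_, x, hx, (dist_triangle _ _ _).trans (add_le_add hd (hψ n))⟩
    rintro _ ⟨m, rfl⟩
    exact ⟨φ m, ⟨m, rfl⟩, hφ m⟩
  · obtain ⟨i, hi, x, hx, hd⟩ := h₂ n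
    refine ⟨i, hi.of_near hC ?_, x, hx, (dist_triangle _ _ _).trans (add_le_add hd (hφ n))⟩
    rintro _ ⟨m, rfl⟩
    exact ⟨ψ m, ⟨m, rfl⟩, hψ m⟩

/-- a coarse equivalence induces a uniform isomorphism on spaces of ends. -/
theorem soe_uniform_isomorphism_of_coarse_equiv [MetricSpace X] [MetricSpace Y]
    (f : X → Y) (hf : IsCoarseMap f)
    (hequiv : ∃ g : Y → X, IsCoarseMap g ∧ CloseMaps (f ∘ g) id ∧ CloseMaps (g ∘ f) id) :
    -- injective
    (∀ φ ψ : ℕ → X, IsCoarseMap φ → IsCoarseMap ψ →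
      SameEnd (f ∘ φ) (f ∘ ψ) → SameEnd φ ψ) ∧
    -- surjective
    (∀ ψ : ℕ → Y, IsCoarseMap ψ → ∃ φ : ℕ → X, IsCoarseMap φ ∧ SameEnd (f ∘ φ) ψ) ∧
    -- soe(f) uniformly continuous
    (∀ (ι : Type) [Fintype ι] (U : ι → Set Y), IsCoarseCover U →
      ∃ (n : ℕ) (V : Fin n → Set X), IsCoarseCover V ∧
        ∀ φ ψ : ℕ → X, IsCoarseMap φ → IsCoarseMap ψ →
          inUNbhd V φ ψ → inUNbhd U (f ∘ φ) (f ∘ ψ)) ∧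
    -- the inverse uniformly continuous
    (∀ (ι : Type) [Fintype ι] (V : ι → Set X), IsCoarseCover V →
      ∃ (n : ℕ) (U : Fin n → Set Y), IsCoarseCover U ∧
        ∀ φ ψ : ℕ → X, IsCoarseMap φ → IsCoarseMap ψ →
          inUNbhd U (f ∘ φ) (f ∘ ψ) → inUNbhd V φ ψ) := by
  obtain ⟨g, hg, hfg, hgf⟩ := hequiv
  obtain ⟨K, hK⟩ := hfg.dist_le
  obtain ⟨L, hL⟩ := hgf.dist_le
  simp only [Function.comp_apply, id_eq] at hK hL
  refine ⟨?_, ?_, ?_, ?_⟩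
  · intro φ ψ _ _ h
    obtain ⟨C, hC⟩ := sameEnd_iff.1 h
    obtain ⟨D, hD⟩ := hg.dist_le C
    refine sameEnd_iff.2 ⟨L + D + L, fun n => ?_⟩
    obtain ⟨m, hm⟩ := hC n
    have h₁ := hD _ _ hm
    simp only [Function.comp_apply] at h₁
    have h₂ := dist_triangle4 (ψ m) (g (f (ψ m))) (g (f (φ n))) (φ n)
    rw [dist_comm (ψ m) (g (f (ψ m)))] at h₂
    have h₃ := hL (ψ m)
    have h₄ := hL (φ n)
    exact ⟨m, by linarith⟩
  · intro ψ hψ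
    refine ⟨g ∘ ψ, hg.comp hψ, sameEnd_iff.2 ⟨K, fun n => ⟨n, ?_⟩⟩⟩
    rw [dist_comm]
    exact hK (ψ n)
  · intro ι _ U hU
    let e := (Fintype.equivFin ι).symm
    exact ⟨Fintype.card ι, fun k => f ⁻¹' U (e k), (hU.reindex e).preimage hf,
      fun φ ψ _ _ h => inUNbhd.of_reindex e (inUNbhd.comp hf h)⟩
  · intro ι _ V hV
    let e := (Fintype.equivFin ι).symm
    refine ⟨Fintype.card ι, fun k => g ⁻¹' V (e k), (hV.reindex e).preimage hg,
      fun φ ψ _ _ h => ?_⟩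
    exact inUNbhd.of_close (fun n => hL (φ n)) (fun n => hL (ψ n))
      (inUNbhd.of_reindex e (inUNbhd.comp hg h))
end

section
/- Let the metric space X be a coarse disjoint union of subspaces A and B, i.e. A ∪ B = X and A, B are coarsely disjoint. Then soe(X) is the uniform disjoint union of soe(A) and soe(B): every endpoint of X has a representative with image contained in A or a representative with image contained in B, no endpoint has both, and there is a uniformly continuous map soe(X) → {−1,1} (with the discrete uniformity) sending the endpoints represented in A to 1 and those represented in B to −1. -/
/-!
A coarse map `φ : ℕ → X` moves in steps of bounded length, and coarse disjointness confines every
pair `(a, b) ∈ A × B` at distance at most a given constant to a bounded set. Since `φ` eventually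
leaves that bounded set, a tail of `φ` stays in `A` or in `B` (`exists_tail`), and a tail represents
the same endpoint as `φ` (`sameEnd_tail`).

A ray represented in `A` stays at bounded distance from `A`. A ray at bounded distance from both `A`
and `B` would have bounded image, which is impossible (`not_near_both`); hence the two alternatives
exclude each other. For uniform continuity the coarse cover `{A, B}` suffices: if `φ` is near `A`,
then its coarse star is contained in `A`, so any `ψ` in the corresponding neighbourhood of `φ` is
near `A` as well.
-/

open Set

variable {X Y : Type*}

theorem isBoundedSet_iff [MetricSpace X] {K : Set X} :
    IsBoundedSet K ↔ Bornology.IsBounded K := by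
  rw [Metric.isBounded_iff]
  constructor
  · rintro ⟨C, hC⟩
    exact ⟨C, fun x hx y hy => hC (x, y) ⟨hx, hy⟩⟩
  · rintro ⟨C, hC⟩
    exact ⟨C, fun p hp => hC hp.1 hp.2⟩

/-- At each scale `R`, the pairs of a coentourage at distance at most `R` lie in one bounded set. -/
theorem IsCoentourage.exists_bounded [MetricSpace X] {C : Set (X × X)} (h : IsCoentourage C)
    (R : ℝ) : ∃ K : Set X, Bornology.IsBounded K ∧
      ∀ x y, (x, y) ∈ C → dist x y ≤ R → x ∈ K ∧ y ∈ K := by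
  obtain ⟨K, hK, hsub⟩ := h {p | dist p.1 p.2 ≤ R} ⟨R, fun p hp => hp⟩
  exact ⟨K, isBoundedSet_iff.1 hK, fun x y hxy hd => hsub (a := (x, y)) ⟨hd, hxy⟩⟩

theorem isCoentourage_of_bounded [MetricSpace X] {C : Set (X × X)}
    (h : ∀ R : ℝ, ∃ K : Set X, Bornology.IsBounded K ∧
      ∀ x y, (x, y) ∈ C → dist x y ≤ R → x ∈ K ∧ y ∈ K) : IsCoentourage C := by
  rintro E ⟨R, hR⟩
  obtain ⟨K, hK, hsub⟩ := h R
  exact ⟨K, isBoundedSet_iff.2 hK, fun p hp => hsub p.1 p.2 hp.2 (hR p hp.1)⟩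

theorem IsCoarseMap.exists_dist_le [MetricSpace X] {φ : ℕ → X} (h : IsCoarseMap φ) (R : ℝ) :
    ∃ C : ℝ, ∀ m n : ℕ, dist m n ≤ R → dist (φ m) (φ n) ≤ C := by
  obtain ⟨C, hC⟩ := h.1 {p | dist p.1 p.2 ≤ R} ⟨R, fun p hp => hp⟩
  exact ⟨C, fun m n hmn => hC (φ m, φ n) ⟨(m, n), hmn, rfl⟩⟩

theorem IsCoarseMap.eventually_notMem [MetricSpace X] {φ : ℕ → X} (h : IsCoarseMap φ)
    {K : Set X} (hK : Bornology.IsBounded K) : ∃ N : ℕ, ∀ n, N ≤ n → φ n ∉ K := by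
  have hb := isBoundedSet_iff.1 (h.2 K (isBoundedSet_iff.2 hK))
  obtain ⟨r, hr⟩ := hb.subset_closedBall (0 : ℕ)
  obtain ⟨N, hN⟩ := exists_nat_gt r
  refine ⟨N, fun n hn hmem => ?_⟩
  have h1 : dist n 0 ≤ r := hr hmem
  rw [Nat.dist_eq] at h1
  have h2 : (N : ℝ) ≤ n := by exact_mod_cast hn
  simp at h1
  linarith

theorem dist_nat_add (n N : ℕ) : dist (n + N) n ≤ (N : ℝ) := by
  rw [Nat.dist_eq]
  simp

theorem IsCoarseMap.tail [MetricSpace X] {φ : ℕ → X} (h : IsCoarseMap φ) (N : ℕ) :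
    IsCoarseMap (fun n => φ (n + N)) := by
  constructor
  · rintro E ⟨R, hR⟩
    obtain ⟨C, hC⟩ := h.exists_dist_le R
    refine ⟨C, ?_⟩
    rintro _ ⟨⟨m, n⟩, hp, rfl⟩
    refine hC _ _ ?_
    have h1 := hR _ hp
    simpa [Nat.dist_eq] using h1
  · rintro K hK
    obtain ⟨R, hR⟩ := h.2 K hK
    refine ⟨R, fun p hp => ?_⟩
    have h1 := hR (p.1 + N, p.2 + N) hp
    simpa [Nat.dist_eq] using h1

theorem sameEnd_tail [MetricSpace X] {φ : ℕ → X} (h : IsCoarseMap φ) (N : ℕ) :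
    SameEnd φ (fun n => φ (n + N)) := by
  obtain ⟨C, hC⟩ := h.exists_dist_le N
  refine ⟨Set.range fun n => (φ (n + N), φ n), ⟨C, ?_⟩, ?_⟩
  · rintro _ ⟨n, rfl⟩
    exact hC _ _ (dist_nat_add n N)
  · ext y
    constructor
    · rintro ⟨x, -, n, hn⟩
      exact ⟨n, congrArg Prod.snd hn⟩
    · rintro ⟨n, rfl⟩
      exact ⟨φ (n + N), ⟨n, rfl⟩, n, rfl⟩

theorem exists_tail [MetricSpace X] {A B : Set X} (hcover : A ∪ B = Set.univ)
    (hdisj : IsCoentourage (A ×ˢ B)) {φ : ℕ → X} (h : IsCoarseMap φ) :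
    ∃ N : ℕ, (∀ n, φ (n + N) ∈ A) ∨ (∀ n, φ (n + N) ∈ B) := by
  obtain ⟨C, hC⟩ := h.exists_dist_le 1
  have hstep : ∀ n, dist (φ (n + 1)) (φ n) ≤ C := fun n =>
    hC _ _ (by simpa using dist_nat_add n 1)
  obtain ⟨K, hK, hsub⟩ := hdisj.exists_bounded C
  obtain ⟨N, hN⟩ := h.eventually_notMem hK
  have hmem : ∀ x, x ∈ A ∨ x ∈ B := fun x => by
    have hx : x ∈ A ∪ B := hcover ▸ Set.mem_univ x
    exact hx
  refine ⟨N, ?_⟩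
  rcases hmem (φ (0 + N)) with h0 | h0
  · left
    intro n
    induction n with
    | zero => exact h0
    | succ k ih =>
      rw [Nat.add_right_comm]
      refine (hmem _).resolve_right fun hb => ?_
      exact hN (k + N) (by omega)
        (hsub _ _ ⟨ih, hb⟩ (by rw [dist_comm]; exact hstep _)).1
  · right
    intro n
    induction n with
    | zero => exact h0
    | succ k ih =>
      rw [Nat.add_right_comm]
      refine (hmem _).resolve_left fun ha => ?_
      exact hN (k + N) (by omega) (hsub _ _ ⟨ha, ih⟩ (hstep _)).2

/-- The image of `φ` stays at bounded distance from the set `A`. -/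
def NearSet [MetricSpace X] (φ : ℕ → X) (A : Set X) : Prop :=
  ∃ C : ℝ, ∀ n, ∃ a ∈ A, dist (φ n) a ≤ C

theorem nearSet_of_subset_entImage [MetricSpace X] {φ : ℕ → X} {A S : Set X} {E : Set (X × X)}
    (hE : IsEntourage E) (hφ : Set.range φ ⊆ entImage E S) (hS : S ⊆ A) : NearSet φ A := by
  obtain ⟨C, hC⟩ := hE
  refine ⟨C, fun n => ?_⟩
  obtain ⟨x, hx, hxE⟩ := hφ ⟨n, rfl⟩
  exact ⟨x, hS hx, by rw [dist_comm]; exact hC _ hxE⟩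

theorem nearSet_of_rep [MetricSpace X] {φ : ℕ → X} {A : Set X}
    (h : ∃ φ' : ℕ → X, IsCoarseMap φ' ∧ SameEnd φ φ' ∧ Set.range φ' ⊆ A) : NearSet φ A := by
  obtain ⟨φ', -, ⟨E, hE, heq⟩, hA⟩ := h
  exact nearSet_of_subset_entImage hE heq.ge hA

theorem isCoentourage_range_prod [MetricSpace X] {A B : Set X}
    (hdisj : IsCoentourage (A ×ˢ B)) {φ : ℕ → X} (hA : NearSet φ A) :
    IsCoentourage (Set.range φ ×ˢ B) := by
  obtain ⟨C, hC⟩ := hA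
  refine isCoentourage_of_bounded fun R => ?_
  obtain ⟨K, hK, hsub⟩ := hdisj.exists_bounded (C + R)
  refine ⟨Metric.cthickening C K, hK.cthickening, ?_⟩
  rintro _ b ⟨⟨n, rfl⟩, hb⟩ hd
  obtain ⟨a, ha, had⟩ := hC n
  have hab : dist a b ≤ C + R := by
    have := dist_triangle_left a b (φ n)
    linarith
  obtain ⟨haK, hbK⟩ := hsub a b ⟨ha, hb⟩ hab
  exact ⟨Metric.mem_cthickening_of_dist_le _ a _ _ haK had, Metric.self_subset_cthickening _ hbK⟩

theorem not_near_both [MetricSpace X] {A B : Set X} (hdisj : IsCoentourage (A ×ˢ B))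
    {φ : ℕ → X} (h : IsCoarseMap φ) (hA : NearSet φ A) (hB : NearSet φ B) : False := by
  obtain ⟨R, hR⟩ := hB
  obtain ⟨K, hK, hsub⟩ := (isCoentourage_range_prod hdisj hA).exists_bounded R
  obtain ⟨N, hN⟩ := h.eventually_notMem hK
  obtain ⟨b, hb, hd⟩ := hR N
  exact hN N le_rfl (hsub _ _ ⟨⟨N, rfl⟩, hb⟩ hd).1

theorem isCoarseCover_pair [MetricSpace X] {A B : Set X} (hcover : A ∪ B = Set.univ)
    (hdisj : IsCoentourage (A ×ˢ B)) : IsCoarseCover ![A, B] := by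
  refine isCoentourage_of_bounded fun R => ?_
  obtain ⟨K, hK, hsub⟩ := hdisj.exists_bounded R
  refine ⟨K, hK, fun x y hxy hd => ?_⟩
  have hx : x ∈ A ∪ B := hcover ▸ Set.mem_univ x
  have hy : y ∈ A ∪ B := hcover ▸ Set.mem_univ y
  simp only [Set.mem_compl_iff, Set.mem_iUnion, Fin.exists_fin_two, Matrix.cons_val_zero,
    Matrix.cons_val_one, Set.mem_prod, not_or] at hxy
  rcases hx with hx | hx <;> rcases hy with hy | hy
  · exact absurd ⟨hx, hy⟩ hxy.1
  · exact hsub _ _ ⟨hx, hy⟩ hd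
  · exact (hsub _ _ ⟨hy, hx⟩ (by rwa [dist_comm])).symm
  · exact absurd ⟨hx, hy⟩ hxy.2

theorem coarseStar_pair_subset [MetricSpace X] {A B : Set X} (hdisj : IsCoentourage (A ×ˢ B))
    {φ : ℕ → X} (hA : NearSet φ A) : coarseStar (Set.range φ) ![A, B] ⊆ A := by
  refine Set.iUnion₂_subset fun i hi => ?_
  fin_cases i
  · exact subset_rfl
  · exact absurd (isCoentourage_range_prod hdisj hA) hi

/-- The neighbourhoods given by the coarse cover `{A, B}` separate rays near `A` from rays
near `B`. -/
theorem not_inUNbhd_pair [MetricSpace X] {A B : Set X} (hdisj : IsCoentourage (A ×ˢ B))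
    {φ ψ : ℕ → X} (hψ : IsCoarseMap ψ) (hA : NearSet φ A) (hB : NearSet ψ B) :
    ¬ inUNbhd ![A, B] φ ψ := by
  rintro ⟨E, hE, h1, -⟩
  exact not_near_both hdisj hψ
    (nearSet_of_subset_entImage hE h1 (coarseStar_pair_subset hdisj hA)) hB

theorem inUNbhd.symm [MetricSpace X] {ι : Type*} {U : ι → Set X} {φ ψ : ℕ → X}
    (h : inUNbhd U φ ψ) : inUNbhd U ψ φ := by
  obtain ⟨E, hE, h1, h2⟩ := h
  exact ⟨E, hE, h2, h1⟩

/-- the space of ends of a coarse disjoint union is the uniform disjoint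
union of the spaces of ends. -/
theorem soe_coarse_disjoint_union [MetricSpace X] (A B : Set X)
    (hcover : A ∪ B = Set.univ) (hdisj : IsCoentourage (A ×ˢ B)) :
    -- every endpoint is represented in A or in B
    (∀ φ : ℕ → X, IsCoarseMap φ →
      (∃ φ' : ℕ → X, IsCoarseMap φ' ∧ SameEnd φ φ' ∧ Set.range φ' ⊆ A) ∨
      (∃ φ' : ℕ → X, IsCoarseMap φ' ∧ SameEnd φ φ' ∧ Set.range φ' ⊆ B)) ∧
    -- no endpoint is represented in both
    (∀ φ : ℕ → X, IsCoarseMap φ →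
      ¬ ((∃ φ' : ℕ → X, IsCoarseMap φ' ∧ SameEnd φ φ' ∧ Set.range φ' ⊆ A) ∧
         (∃ φ' : ℕ → X, IsCoarseMap φ' ∧ SameEnd φ φ' ∧ Set.range φ' ⊆ B))) ∧
    -- a uniformly continuous map to the two-point discrete uniform space {-1, 1}
    (∃ r : (ℕ → X) → ℤ,
      (∀ φ : ℕ → X, IsCoarseMap φ →
        (∃ φ' : ℕ → X, IsCoarseMap φ' ∧ SameEnd φ φ' ∧ Set.range φ' ⊆ A) → r φ = 1) ∧
      (∀ φ : ℕ → X, IsCoarseMap φ →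
        (∃ φ' : ℕ → X, IsCoarseMap φ' ∧ SameEnd φ φ' ∧ Set.range φ' ⊆ B) → r φ = -1) ∧
      (∃ (n : ℕ) (W : Fin n → Set X), IsCoarseCover W ∧
        ∀ φ ψ : ℕ → X, IsCoarseMap φ → IsCoarseMap ψ → inUNbhd W φ ψ → r φ = r ψ)) := by
  classical
  have hrep : ∀ φ : ℕ → X, IsCoarseMap φ →
      (∃ φ' : ℕ → X, IsCoarseMap φ' ∧ SameEnd φ φ' ∧ Set.range φ' ⊆ A) ∨
      (∃ φ' : ℕ → X, IsCoarseMap φ' ∧ SameEnd φ φ' ∧ Set.range φ' ⊆ B) := by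
    intro φ hφ
    obtain ⟨N, hN⟩ := exists_tail hcover hdisj hφ
    exact hN.imp
      (fun h => ⟨_, hφ.tail N, sameEnd_tail hφ N, Set.range_subset_iff.2 h⟩)
      (fun h => ⟨_, hφ.tail N, sameEnd_tail hφ N, Set.range_subset_iff.2 h⟩)
  have hnear : ∀ φ : ℕ → X, IsCoarseMap φ → ¬ NearSet φ A → NearSet φ B := fun φ hφ hn =>
    nearSet_of_rep ((hrep φ hφ).resolve_left fun h => hn (nearSet_of_rep h))
  refine ⟨hrep, fun φ hφ h => not_near_both hdisj hφ (nearSet_of_rep h.1) (nearSet_of_rep h.2),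
    fun φ => if NearSet φ A then 1 else -1, fun φ hφ h => if_pos (nearSet_of_rep h),
    fun φ hφ h => if_neg fun hA => not_near_both hdisj hφ hA (nearSet_of_rep h),
    2, ![A, B], isCoarseCover_pair hcover hdisj, fun φ ψ hφ hψ hU => ?_⟩
  by_cases h1 : NearSet φ A <;> by_cases h2 : NearSet ψ A
  · simp [h1, h2]
  · exact absurd hU (not_inUNbhd_pair hdisj hψ h1 (hnear ψ hψ h2))
  · exact absurd hU.symm (not_inUNbhd_pair hdisj hφ h2 (hnear φ hφ h1))
  · simp [h1, h2]
end
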